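/- Let (X, τ) be an L-topological space and G ∈ L^X. Then G is fuzzy SP-compact if and only if G is a-fuzzy SP-compact for every a ∈ M(L). -/

import Mathlib

/-!
Any `a` is the supremum of the elements `b ≪ a` (`exists_wayBelow_not_le`, where complete
distributivity enters), and any element is the supremum of the coprime elements below it
(`exists_coprime_not_le`).

If `G` is fuzzy SP-compact and `U` is a `Q_a`-cover, then `a` lies below the supremum, over the
finite `ψ ⊆ U`, of the degrees to which `ψ` covers `G`. So `b ≪ a` lies below one of these degrees.
Conversely, the degree to which `U` covers `G` only has to be compared with the coprime `a` below
it; for these, `U` is a `Q_a`-cover, so every `b ≪ a` lies below the supremum over finite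
subfamilies, and therefore `a` does.

Coprime elements are obtained from prime ones through the involution. For the primes, a chain
`x = b 0 ≫ b 1 ≫ ...` of elements not below `y` generates a filter containing `x` and not `y`, whose
complement is closed under suprema of nonempty chains; an element maximal in that complement is
prime.
-/


/-!
Common definitions: completely distributive complete lattice `L` with an
order-reversing involution `c`, `L`-subsets `X → L`, the wayBelow relation `≪`,
coprime/prime elements, `L`-(fuzzy) topologies, closure/interior, (Semi-)Preopen
subsets, the `L`-fuzzy Preopen and Semi-Preopen operators, and the various
compactness / cover / shading / remote-family notions.
-/

variable {L : Type*} [CompletelyDistribLattice L] {X : Type*}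

/-- `a ≪ b`: for every subset `D ⊆ L` with `b ≤ sSup D` there is `d ∈ D` with `a ≤ d`. -/
def wayBelow (a b : L) : Prop := ∀ D : Set L, b ≤ sSup D → ∃ d ∈ D, a ≤ d

/-- coprime (non-zero) element of `L`; `M(L)` is the set of such elements. -/
def IsCoprimeElem (a : L) : Prop := a ≠ ⊥ ∧ ∀ p q : L, a ≤ p ⊔ q → a ≤ p ∨ a ≤ q

/-- prime (non-unit) element of `L`; `P(L)` is the set of such elements. -/
def IsPrimeElem (p : L) : Prop := p ≠ ⊤ ∧ ∀ a b : L, a ⊓ b ≤ p → a ≤ p ∨ b ≤ p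

/-- pointwise complement of an `L`-subset via the involution `c`. -/
def pcompl (c : L → L) (A : X → L) : X → L := fun x => c (A x)

/-- `T : L^X → L` is an `L`-fuzzy topology. -/
def IsLFuzzyTopology (T : (X → L) → L) : Prop :=
  T ⊥ = ⊤ ∧ T ⊤ = ⊤ ∧ (∀ A B : X → L, T A ⊓ T B ≤ T (A ⊓ B)) ∧
    (∀ S : Set (X → L), (⨅ A ∈ S, T A) ≤ T (sSup S))

/-- `τ ⊆ L^X` is an `L`-topology. -/
def IsLTopology (τ : Set (X → L)) : Prop :=
  ⊥ ∈ τ ∧ ⊤ ∈ τ ∧ (∀ S : Set (X → L), S ⊆ τ → sSup S ∈ τ) ∧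
    (∀ A B : X → L, A ∈ τ → B ∈ τ → A ⊓ B ∈ τ)

/-- closure in an `L`-topological space: infimum of all closed `L`-subsets above `A`. -/
def lcl (c : L → L) (τ : Set (X → L)) (A : X → L) : X → L :=
  sInf {K : X → L | pcompl c K ∈ τ ∧ A ≤ K}

/-- interior in an `L`-topological space: supremum of all open `L`-subsets below `A`. -/
def lint (τ : Set (X → L)) (A : X → L) : X → L :=
  sSup {U : X → L | U ∈ τ ∧ U ≤ A}

/-- `A` is Preopen: `A ≤ int (cl A)`. -/
def IsPreopen (c : L → L) (τ : Set (X → L)) (A : X → L) : Prop :=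
  A ≤ lint τ (lcl c τ A)

/-- `A` is Semi-Preopen: there is a Preopen `B` with `B ≤ A ≤ cl B`. -/
def IsSemiPreopen (c : L → L) (τ : Set (X → L)) (A : X → L) : Prop :=
  ∃ B : X → L, IsPreopen c τ B ∧ B ≤ A ∧ A ≤ lcl c τ B

/-- the `L`-fuzzy Preopen operator `T_p` induced by `T`. -/
def preopenOp (c : L → L) (T : (X → L) → L) (A : X → L) : L :=
  ⨅ x : X, ⨅ lam : L, ⨅ _ : wayBelow lam (A x),
    ⨆ B : X → L, ⨆ _ : wayBelow lam (B x),
      (T B ⊓ ⨅ y : X, ⨅ mu : L, ⨅ _ : wayBelow mu (B y),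
        ⨅ D : X → L, ⨅ _ : A ≤ D, ⨅ _ : ¬ mu ≤ D y, c (T (pcompl c D)))

/-- the `L`-fuzzy Semi-Preopen operator `T_sp` induced by `T`. -/
def spOp (c : L → L) (T : (X → L) → L) (A : X → L) : L :=
  ⨆ B : X → L, ⨆ _ : B ≤ A,
    (preopenOp c T B ⊓ ⨅ x : X, ⨅ lam : L, ⨅ _ : wayBelow lam (A x),
      ⨅ D : X → L, ⨅ _ : B ≤ D, ⨅ _ : ¬ lam ≤ D x, c (T (pcompl c D)))

/-- `G` is `L`-fuzzy SP-compact in the `L`-fuzzy topological space `(X, T)`. -/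
def LFuzzySPCompact (c : L → L) (T : (X → L) → L) (G : X → L) : Prop :=
  ∀ P : Set (X → L),
    (⨅ F ∈ P, spOp c T F) ⊓ (⨅ x : X, c (G x) ⊔ ⨆ F ∈ P, F x) ≤
      ⨆ Q : Finset (X → L), ⨆ _ : ↑Q ⊆ P, ⨅ x : X, c (G x) ⊔ ⨆ F ∈ Q, F x

/-- `G` is fuzzy SP-compact in the `L`-topological space `(X, τ)`. -/
def FuzzySPCompact (c : L → L) (τ : Set (X → L)) (G : X → L) : Prop :=
  ∀ U : Set (X → L), (∀ A ∈ U, IsSemiPreopen c τ A) →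
    (⨅ x : X, c (G x) ⊔ ⨆ A ∈ U, A x) ≤
      ⨆ ψ : Finset (X → L), ⨆ _ : ↑ψ ⊆ U, ⨅ x : X, c (G x) ⊔ ⨆ A ∈ ψ, A x

/-- `U` is a `Q_a`-cover of `G`. -/
def QCover (c : L → L) (a : L) (G : X → L) (U : Set (X → L)) : Prop :=
  ∀ x : X, a ≤ c (G x) ⊔ ⨆ A ∈ U, A x

/-- `U` is a strong `β_a`-cover of `G`. -/
def StrongBetaCover (c : L → L) (a : L) (G : X → L) (U : Set (X → L)) : Prop :=
  wayBelow a (⨅ x : X, c (G x) ⊔ ⨆ A ∈ U, A x)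

/-- `P` is a strong `a`-remote family of `G`. -/
def StrongRemote (a : L) (G : X → L) (P : Set (X → L)) : Prop :=
  ¬ a ≤ ⨆ x : X, G x ⊓ ⨅ B ∈ P, B x

/-- `U` is a strong `a`-shading of `G`. -/
def StrongShading (c : L → L) (a : L) (G : X → L) (U : Set (X → L)) : Prop :=
  ¬ (⨅ x : X, c (G x) ⊔ ⨆ A ∈ U, A x) ≤ a

/-- `G` is `a`-fuzzy SP-compact in the `L`-topological space `(X, τ)`. -/
def AFuzzySPCompact (c : L → L) (τ : Set (X → L)) (a : L) (G : X → L) : Prop :=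
  ∀ b : L, wayBelow b a →
    ∀ U : Set (X → L), (∀ A ∈ U, IsSemiPreopen c τ A) → QCover c a G U →
      ∃ V : Finset (X → L), ↑V ⊆ U ∧ QCover c b G ↑V

/-- Complete distributivity, in the form `x = sup β(x)`. -/
lemma exists_wayBelow_not_le {x y : L} (h : ¬ x ≤ y) : ∃ b, wayBelow b x ∧ ¬ b ≤ y := by
  by_contra! H
  apply h
  -- Distribute the infimum of all `sSup D ≥ x`: each choice function picks an element `≪ x`.
  have h1 : x ≤ ⨅ D : {D : Set L // x ≤ sSup D}, ⨆ d : D.1, (d : L) :=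
    le_iInf fun D => by simpa [sSup_eq_iSup'] using D.2
  rw [iInf_iSup_eq] at h1
  refine h1.trans (iSup_le fun g => H _ fun D hD => ?_)
  exact ⟨g ⟨D, hD⟩, (g ⟨D, hD⟩).2, iInf_le (fun D => ((g D : D.1) : L)) ⟨D, hD⟩⟩

lemma wayBelow_le {a b : L} (h : wayBelow a b) : a ≤ b := by
  obtain ⟨d, rfl, hd⟩ := h {b} (by simp)
  exact hd

/-- Every element is the infimum of the prime elements above it. -/
lemma exists_prime_not_le {x y : L} (h : ¬ x ≤ y) : ∃ p, IsPrimeElem p ∧ y ≤ p ∧ ¬ x ≤ p := by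
  choose! f hf1 hf2 using fun (z : L) (hz : ¬ z ≤ y) => exists_wayBelow_not_le hz
  let b : ℕ → L := fun n => f^[n] x
  have hb_succ : ∀ n, b (n + 1) = f (b n) := fun n => Function.iterate_succ_apply' f n x
  have hb : ∀ n, ¬ b n ≤ y := by
    intro n
    induction n with
    | zero => exact h
    | succ n ih => rw [hb_succ]; exact hf2 _ ih
  have hb_way : ∀ n, wayBelow (b (n + 1)) (b n) := fun n => by
    rw [hb_succ]; exact hf1 _ (hb n)
  have hb_anti : Antitone b := antitone_nat_of_succ_le fun n => wayBelow_le (hb_way n)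
  obtain ⟨p, hyp, hp⟩ := zorn_le_nonempty₀ {z : L | ∀ n, ¬ b n ≤ z}
    (fun C hC _ _ _ => ⟨sSup C, fun n hn => by
      obtain ⟨d, hd, hnd⟩ := hb_way n C hn
      exact hC hd (n + 1) hnd, fun z hz => le_sSup hz⟩) y hb
  have hpF : ∀ n, ¬ b n ≤ p := hp.prop
  have hlarger : ∀ u, ¬ u ≤ p → ∃ n, b n ≤ p ⊔ u := by
    intro u hu
    by_contra! H
    exact hu (le_sup_right.trans (hp.le_of_ge H le_sup_left))
  refine ⟨p, ⟨fun ht => hpF 0 (ht ▸ le_top), fun u v huv => ?_⟩, hyp, hpF 0⟩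
  by_contra! H
  obtain ⟨n, hn⟩ := hlarger u H.1
  obtain ⟨m, hm⟩ := hlarger v H.2
  apply hpF (max n m)
  calc b (max n m) ≤ (p ⊔ u) ⊓ (p ⊔ v) :=
        le_inf ((hb_anti (le_max_left n m)).trans hn) ((hb_anti (le_max_right n m)).trans hm)
    _ = p ⊔ u ⊓ v := sup_inf_left _ _ _ |>.symm
    _ = p := sup_eq_left.mpr huv

/-- Every element is the supremum of the coprime elements below it. -/
lemma exists_coprime_not_le (c : L → L) (hc_inv : ∀ a : L, c (c a) = a)
    (hc_anti : ∀ a b : L, a ≤ b → c b ≤ c a) {x y : L} (h : ¬ x ≤ y) :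
    ∃ a, IsCoprimeElem a ∧ a ≤ x ∧ ¬ a ≤ y := by
  have swap : ∀ {u v : L}, c u ≤ v → c v ≤ u := fun {u v} huv => hc_inv u ▸ hc_anti _ _ huv
  have hxy : ¬ c y ≤ c x := fun H => h (by simpa [hc_inv] using hc_anti _ _ H)
  obtain ⟨p, ⟨-, hp⟩, hxp, hyp⟩ := exists_prime_not_le hxy
  have hpy : ¬ c p ≤ y := fun H => hyp (swap H)
  refine ⟨c p, ⟨fun H => hpy (H ▸ bot_le), fun u v huv => ?_⟩, swap hxp, hpy⟩
  have huv' : c u ⊓ c v ≤ p := by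
    have : u ⊔ v ≤ c (c u ⊓ c v) := sup_le
      (by simpa [hc_inv] using hc_anti _ _ (inf_le_left : c u ⊓ c v ≤ c u))
      (by simpa [hc_inv] using hc_anti _ _ (inf_le_right : c u ⊓ c v ≤ c v))
    simpa [hc_inv] using swap (huv.trans this)
  exact (hp _ _ huv').imp swap swap

theorem stmt12 (c : L → L) (hc_inv : ∀ a : L, c (c a) = a)
    (hc_anti : ∀ a b : L, a ≤ b → c b ≤ c a) (τ : Set (X → L)) (hτ : IsLTopology τ) (G : X → L) :
    FuzzySPCompact c τ G ↔ ∀ a : L, IsCoprimeElem a → AFuzzySPCompact c τ a G := by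
  constructor
  · intro hG a _ b hb U hU hcov
    have h1 := (le_iInf hcov).trans (hG U hU)
    rw [iSup_subtype', ← sSup_range] at h1
    obtain ⟨_, ⟨⟨V, hV⟩, rfl⟩, hbV⟩ := hb _ h1
    exact ⟨V, hV, fun x => hbV.trans (iInf_le _ x)⟩
  · intro H U hU
    by_contra hlt
    obtain ⟨a, ha, hax, hay⟩ := exists_coprime_not_le c hc_inv hc_anti hlt
    obtain ⟨b, hb, hby⟩ := exists_wayBelow_not_le hay
    obtain ⟨V, hV, hcov⟩ := H a ha b hb U hU fun x => hax.trans (iInf_le _ x)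
    exact hby (le_iSup₂_of_le V hV (le_iInf hcov))
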